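/- Let H be a real Hilbert space, let η > 0, L > 0, let K be a finite index set with nonnegative weights p : K → ℝ summing to 1, let F : H → ℝ be differentiable, and for each k ∈ K let F_k : H → ℝ be differentiable with ∇F_k L-Lipschitz and ‖∇F_k(x) − ∇F(x)‖ ≤ δ_k for all x ∈ H, where δ_k ≥ 0. Fix w₀ ∈ H and define, for each k, the sequence w^k by w^k(0) = w₀ and w^k(e) = w^k(e−1) − η∇F_k(w^k(e−1)), and define v by v(0) = w₀ and v(e) = v(e−1) − η∇F(v(e−1)). Then for any E ∈ ℕ, ‖Σ_{k∈K} p_k·w^k(E) − v(E)‖ ≤ ((Σ_{k∈K} p_k·δ_k)/L)·((ηL + 1)^E − 1). -/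

import Mathlib

/-!
A trajectory of the descent along `g` is a pseudo-orbit of the descent step along `G`: at each
step it misses the image under that map by at most `‖η‖ * δ`, where `δ` bounds `‖G - g‖`. The
descent step along an `L`-Lipschitz field is `(1 + ‖η‖ * L)`-Lipschitz, so the one-step errors add
up to a geometric sum, which bounds the divergence of every single client. Jensen's inequality for
the distance to the group model then passes to the weighted average.
-/

open Finset
open scoped NNReal

theorem discrete_gronwall_const {R : Type*} [CommSemiring R] [PartialOrder R] [IsOrderedRing R]
    {u : ℕ → R} {b c : R} (hc : 0 ≤ c) (hu : ∀ n, u (n + 1) ≤ c * u n + b) (n : ℕ) :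
    u n ≤ u 0 * c ^ n + b * ∑ i ∈ range n, c ^ i := by
  have h := discrete_gronwall_prod_general (b := fun _ ↦ b) (c := fun _ ↦ c)
    (fun n _ ↦ hu n) (fun _ _ ↦ hc) n.zero_le
  simp only [prod_const, Nat.card_Ico, Nat.Ico_zero_eq_range, card_range, ← mul_sum] at h
  simpa only [← sum_range_reflect (fun i ↦ c ^ i) n, Nat.sub_sub, add_comm 1] using h

theorem dist_orbit_pseudoOrbit_le {X : Type*} [PseudoMetricSpace X] {c : ℝ≥0} {T : X → X}
    (hT : LipschitzWith c T) {ε : ℝ} {u v : ℕ → X} (hu : ∀ n, u (n + 1) = T (u n))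
    (hv : ∀ n, dist (T (v n)) (v (n + 1)) ≤ ε) (n : ℕ) :
    dist (u n) (v n) ≤ dist (u 0) (v 0) * c ^ n + ε * ∑ i ∈ range n, (c : ℝ) ^ i := by
  refine discrete_gronwall_const (u := fun n ↦ dist (u n) (v n)) c.coe_nonneg (fun n ↦ ?_) n
  calc dist (u (n + 1)) (v (n + 1))
      ≤ dist (T (u n)) (T (v n)) + dist (T (v n)) (v (n + 1)) := by
        rw [hu]; exact dist_triangle _ _ _
    _ ≤ c * dist (u n) (v n) + ε := add_le_add (hT.dist_le_mul _ _) (hv n)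

theorem mul_geom_sum_mul_add_one {𝕜 : Type*} [Field 𝕜] (a : 𝕜) {b : 𝕜} (hb : b ≠ 0) (n : ℕ) :
    a * ∑ i ∈ range n, (a * b + 1) ^ i = ((a * b + 1) ^ n - 1) / b := by
  rw [eq_div_iff hb, ← mul_geom_sum, add_sub_cancel_right, mul_right_comm]

section DescentStep

variable {𝕜 V : Type*} [NormedField 𝕜] [SeminormedAddCommGroup V] [NormedSpace 𝕜 V]

/-- One step of the descent along the vector field `G` with learning rate `η`; for `G = ∇f` this
is a gradient descent step on `f`. -/
def descentStep (η : 𝕜) (G : V → V) (x : V) : V := x - η • G x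

theorem lipschitzWith_descentStep (η : 𝕜) {L : ℝ≥0} {G : V → V} (hG : LipschitzWith L G) :
    LipschitzWith (1 + ‖η‖₊ * L) (descentStep η G) :=
  LipschitzWith.id.sub ((lipschitzWith_smul η).comp hG)

theorem dist_descentStep_descentStep (η : 𝕜) (G g : V → V) (x : V) :
    dist (descentStep η G x) (descentStep η g x) = ‖η‖ * ‖G x - g x‖ := by
  rw [descentStep, descentStep, dist_sub_left, dist_smul₀, dist_eq_norm]

theorem dist_descent_le {η : 𝕜} {L : ℝ≥0} (hL : L ≠ 0) {G g : V → V} (hG : LipschitzWith L G)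
    {δ : ℝ} {u v : ℕ → V} (h₀ : u 0 = v 0) (hu : ∀ n, u (n + 1) = descentStep η G (u n))
    (hv : ∀ n, v (n + 1) = descentStep η g (v n)) (hδ : ∀ n, ‖G (v n) - g (v n)‖ ≤ δ) (n : ℕ) :
    dist (u n) (v n) ≤ δ / L * ((‖η‖ * L + 1) ^ n - 1) := by
  have hstep : ∀ n, dist (descentStep η G (v n)) (v (n + 1)) ≤ ‖η‖ * δ := fun n ↦ by
    rw [hv, dist_descentStep_descentStep]
    exact mul_le_mul_of_nonneg_left (hδ n) (norm_nonneg η)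
  calc dist (u n) (v n)
      ≤ dist (u 0) (v 0) * ↑(1 + ‖η‖₊ * L) ^ n
          + ‖η‖ * δ * ∑ i ∈ range n, (↑(1 + ‖η‖₊ * L) : ℝ) ^ i :=
        dist_orbit_pseudoOrbit_le (lipschitzWith_descentStep η hG) hu hstep n
    _ = δ * (‖η‖ * ∑ i ∈ range n, (‖η‖ * L + 1) ^ i) := by
        rw [h₀, dist_self, zero_mul, zero_add, mul_right_comm, mul_comm δ]
        simp only [NNReal.coe_add, NNReal.coe_one, NNReal.coe_mul, coe_nnnorm, add_comm]
    _ = δ / L * ((‖η‖ * L + 1) ^ n - 1) := by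
        rw [mul_geom_sum_mul_add_one _ (NNReal.coe_ne_zero.2 hL), mul_div_left_comm, mul_comm]

end DescentStep

theorem averaged_divergence_general {V : Type*} [SeminormedAddCommGroup V] [NormedSpace ℝ V]
    {η : ℝ} {L : ℝ≥0} (hL : L ≠ 0) {K : Type*} [Fintype K]
    {p : K → ℝ} (hp : ∀ k, 0 ≤ p k) (hsum : ∑ k, p k = 1) {δ : K → ℝ}
    {g : V → V} {G : K → V → V} (hG : ∀ k, LipschitzWith L (G k))
    {w : K → ℕ → V} {v : ℕ → V} (hδ : ∀ k n, ‖G k (v n) - g (v n)‖ ≤ δ k)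
    (h₀ : ∀ k, w k 0 = v 0) (hw : ∀ k n, w k (n + 1) = descentStep η (G k) (w k n))
    (hv : ∀ n, v (n + 1) = descentStep η g (v n)) (E : ℕ) :
    ‖(∑ k, p k • w k E) - v E‖ ≤ ((∑ k, p k * δ k) / L) * ((‖η‖ * L + 1) ^ E - 1) := by
  calc ‖(∑ k, p k • w k E) - v E‖
      = dist (∑ k, p k • w k E) (v E) := (dist_eq_norm _ _).symm
    _ ≤ ∑ k, p k * dist (w k E) (v E) :=
        (convexOn_univ_dist (v E)).map_sum_le (fun k _ ↦ hp k) hsum (fun _ _ ↦ Set.mem_univ _)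
    _ ≤ ∑ k, p k * (δ k / L * ((‖η‖ * L + 1) ^ E - 1)) :=
        sum_le_sum fun k _ ↦ mul_le_mul_of_nonneg_left
          (dist_descent_le hL (hG k) (h₀ k) (hw k) hv (hδ k) E) (hp k)
    _ = ((∑ k, p k * δ k) / L) * ((‖η‖ * L + 1) ^ E - 1) := by
        simp only [sum_div, sum_mul, mul_div_assoc, mul_assoc]

/-- Eq. (12): the divergence between the weighted average of the client models
and the virtual group model after `E` local epochs. -/
theorem averaged_divergence
    {H : Type*} [NormedAddCommGroup H] [InnerProductSpace ℝ H] [CompleteSpace H]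
    (η L : ℝ) (hη : 0 < η) (hL : 0 < L)
    {K : Type*} [Fintype K]
    (p : K → ℝ) (hp : ∀ k, 0 ≤ p k) (hsum : ∑ k, p k = 1)
    (δ : K → ℝ) (hδ : ∀ k, 0 ≤ δ k)
    (F : H → ℝ) (hF : Differentiable ℝ F)
    (Fk : K → H → ℝ) (hFk : ∀ k, Differentiable ℝ (Fk k))
    (hlip : ∀ k, ∀ w v : H, ‖gradient (Fk k) w - gradient (Fk k) v‖ ≤ L * ‖w - v‖)
    (hdiv : ∀ k, ∀ x : H, ‖gradient (Fk k) x - gradient F x‖ ≤ δ k)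
    (w₀ : H) (w : K → ℕ → H) (v : ℕ → H)
    (hw0 : ∀ k, w k 0 = w₀) (hv0 : v 0 = w₀)
    (hw : ∀ k, ∀ e : ℕ, 1 ≤ e → w k e = w k (e - 1) - η • gradient (Fk k) (w k (e - 1)))
    (hv : ∀ e : ℕ, 1 ≤ e → v e = v (e - 1) - η • gradient F (v (e - 1)))
    (E : ℕ) :
    ‖(∑ k, p k • w k E) - v E‖ ≤
      ((∑ k, p k * δ k) / L) * ((η * L + 1) ^ E - 1) := by
  lift L to ℝ≥0 using hL.le
  have hG : ∀ k, LipschitzWith L (gradient (Fk k)) := fun k ↦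
    .of_dist_le_mul (by simpa only [dist_eq_norm] using hlip k)
  simpa only [Real.norm_of_nonneg hη.le] using averaged_divergence_general (η := η)
    (NNReal.coe_pos.1 hL).ne' hp hsum hG (fun k n ↦ hdiv k (v n))
    (fun k ↦ (hw0 k).trans hv0.symm) (fun k n ↦ hw k (n + 1) n.succ_pos)
    (fun n ↦ hv (n + 1) n.succ_pos) E
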